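/- arXiv:2211.03146 — 10 statements merged into one kernel-verified Lean document; each statement's English description precedes it below -/
import Mathlib

section
/- Let G=(V,E) be a finite connected simple graph, let S=(s_1,…,s_p) be a proper vertex list, and let v be a vertex with v ∈ 𝕋(s_i,S) for some i with 1 ≤ i ≤ p. Then the metric interval I(v,s_i) is contained in 𝕋(s_i,S); that is, every vertex w with d(v,s_i)=d(v,w)+d(w,s_i) satisfies w ∈ 𝕋(s_i,S). -/
/-!
If `w` lies on a geodesic from `v` to `s_i`, then for every site `s` the triangle inequality gives
`d(w,s) - d(w,s_i) ≥ d(v,s) - d(v,s_i)`. Hence `s_i` being a nearest site of `v`, strictly nearer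
than each earlier one, passes to `w`.
-/

/-- The distance from a vertex `v` to a list `S` of vertices:
`d(v,S) = min_{s ∈ S} d(v,s)`. -/
noncomputable def dList {V : Type*} (G : SimpleGraph V) (v : V) (S : List V) : ℕ :=
  sInf ((G.dist v) '' {s | s ∈ S})

/-- The territory `𝕋(s_i, S)` of the `i`-th site of the list `S` in the prioritized
Voronoi diagram: vertices `v` with `d(v,s_i) = d(v,S)` and `d(v,s_j) > d(v,S)` for `j < i`. -/
def territory {V : Type*} (G : SimpleGraph V) (S : List V) (i : Fin S.length) : Set V :=
  {v | G.dist v (S.get i) = dList G v S ∧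
       ∀ j : Fin S.length, j < i → dList G v S < G.dist v (S.get j)}

/-- if `v ∈ 𝕋(s_i,S)` then the metric interval `I(v,s_i)` is
contained in `𝕋(s_i,S)`. -/
theorem interval_subset_territory {V : Type*} [Fintype V] (G : SimpleGraph V)
    (hG : G.Connected) (S : List V) (hS : S.Nodup) (i : Fin S.length) (v : V)
    (hv : v ∈ territory G S i) :
    ∀ w : V, G.dist v (S.get i) = G.dist v w + G.dist w (S.get i) →
      w ∈ territory G S i := by
  intro w hw
  obtain ⟨hv1, hv2⟩ := hv
  -- For every site `s`, going from `v` through `w` bounds `d(v,s)` above.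
  have tri : ∀ s, G.dist v s ≤ G.dist v w + G.dist w s := fun s => hG.dist_triangle
  have hmem : S.get i ∈ S := S.get_mem i
  have key : dList G w S = G.dist w (S.get i) := by
    refine le_antisymm (Nat.sInf_le ⟨_, hmem, rfl⟩)
      (le_csInf ⟨_, _, hmem, rfl⟩ ?_)
    rintro _ ⟨s, hs, rfl⟩
    have h1 : dList G v S ≤ G.dist v s := Nat.sInf_le ⟨s, hs, rfl⟩
    have h2 := tri s
    omega
  refine ⟨key.symm, fun j hj => ?_⟩
  have h1 := hv2 j hj
  have h2 := tri (S.get j)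
  omega
end

section
/- Let G=(V,E) be a finite connected simple graph and let S=(s_1,…,s_p) be a proper vertex list. Then for every i with 1 ≤ i ≤ p, the territory 𝕋(s_i,S) induces a connected subgraph of G. -/
/-- The territory described without the minimum `dList`, by comparing sites pairwise. -/
lemma mem_territory_iff {V : Type*} (G : SimpleGraph V) (S : List V) (i : Fin S.length) (v : V) :
    v ∈ territory G S i ↔ (∀ j, G.dist v (S.get i) ≤ G.dist v (S.get j)) ∧
      ∀ j < i, G.dist v (S.get i) < G.dist v (S.get j) := by
  have hle : ∀ j, dList G v S ≤ G.dist v (S.get j) := fun j =>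
    Nat.sInf_le ⟨S.get j, List.get_mem S j, rfl⟩
  constructor
  · rintro ⟨h1, h2⟩
    exact ⟨fun j => h1 ▸ hle j, fun j hj => h1 ▸ h2 j hj⟩
  · rintro ⟨h1, h2⟩
    have h : G.dist v (S.get i) = dList G v S := by
      refine le_antisymm (le_csInf ⟨_, S.get i, List.get_mem S i, rfl⟩ ?_) (hle i)
      rintro _ ⟨s, hs, rfl⟩
      obtain ⟨j, rfl⟩ := List.get_of_mem hs
      exact h1 j
    exact ⟨h, fun j hj => h ▸ h2 j hj⟩

lemma site_mem_territory {V : Type*} (G : SimpleGraph V) (hG : G.Connected) (S : List V)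
    (hS : S.Nodup) (i : Fin S.length) : S.get i ∈ territory G S i := by
  rw [mem_territory_iff]
  simp only [SimpleGraph.dist_self]
  refine ⟨fun j => Nat.zero_le _, fun j hj => hG.pos_dist_of_ne fun h => ?_⟩
  exact hj.ne' (List.nodup_iff_injective_get.1 hS h)

/-- A territory is closed under taking a step along a geodesic towards its site. -/
lemma territory_step {V : Type*} (G : SimpleGraph V) (hG : G.Connected) (S : List V)
    (i : Fin S.length) {v w : V} (hv : v ∈ territory G S i) (hvw : G.Adj v w)
    (hw : G.dist v (S.get i) = G.dist w (S.get i) + 1) : w ∈ territory G S i := by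
  rw [mem_territory_iff] at hv ⊢
  have key : ∀ j, G.dist v (S.get j) ≤ 1 + G.dist w (S.get j) := fun j => by
    simpa [SimpleGraph.dist_eq_one_iff_adj.2 hvw] using
      hG.dist_triangle (u := v) (v := w) (w := S.get j)
  refine ⟨fun j => ?_, fun j hj => ?_⟩
  · have := hv.1 j
    have := key j
    omega
  · have := hv.2 j hj
    have := key j
    omega

lemma exists_adj_dist_succ {V : Type*} (G : SimpleGraph V) (hG : G.Connected) {v s : V} {n : ℕ}
    (h : G.dist v s = n + 1) : ∃ w, G.Adj v w ∧ G.dist w s = n := by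
  obtain ⟨p, hp⟩ := hG.exists_walk_length_eq_dist v s
  cases p with
  | nil => simp at h
  | @cons _ w _ hvw q =>
    refine ⟨w, hvw, ?_⟩
    have h1 := SimpleGraph.dist_le q
    have h2 := hG.dist_triangle (u := v) (v := w) (w := s)
    rw [SimpleGraph.dist_eq_one_iff_adj.2 hvw] at h2
    rw [SimpleGraph.Walk.length_cons] at hp
    omega

/-- every territory of the prioritized Voronoi diagram induces a
connected subgraph of `G`. -/
theorem territory_connected {V : Type*} [Fintype V] (G : SimpleGraph V)
    (hG : G.Connected) (S : List V) (hS : S.Nodup) (i : Fin S.length) :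
    (G.induce (territory G S i)).Connected := by
  rw [SimpleGraph.connected_iff_exists_forall_reachable]
  refine ⟨⟨S.get i, site_mem_territory G hG S hS i⟩, ?_⟩
  suffices H : ∀ n v (hv : v ∈ territory G S i), G.dist v (S.get i) = n →
      (G.induce (territory G S i)).Reachable ⟨S.get i, site_mem_territory G hG S hS i⟩ ⟨v, hv⟩ from
    fun w => H _ w.1 w.2 rfl
  intro n
  induction n with
  | zero =>
    intro v hv h
    obtain rfl := hG.dist_eq_zero_iff.1 h
    exact .rfl
  | succ n ih =>
    intro v hv h
    obtain ⟨w, hvw, hw⟩ := exists_adj_dist_succ G hG h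
    have hwT := territory_step G hG S i hv hvw (by omega)
    have hadj : (G.induce (territory G S i)).Adj ⟨w, hwT⟩ ⟨v, hv⟩ := hvw.symm
    exact (ih w hwT hw).trans hadj.reachable
end

section
/- Let G=(V,E) be a finite connected simple graph, let S=(s_1,…,s_p) be a proper vertex list, and let v be a vertex with d(v,S) ≥ 1 and v ∈ 𝕋(s_i,S). Then there exists a neighbour u of v with d(u,S)=d(v,S)−1 and u ∈ 𝕋(s_i,S), and moreover i = min{ j : 1 ≤ j ≤ p and there exists a neighbour u of v with d(u,S)=d(v,S)−1 and u ∈ 𝕋(s_j,S) }. (This is the correctness invariant of the linear-time BFS computation of the prioritized Voronoi diagram.) -/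
lemma dList_le {V : Type*} (G : SimpleGraph V) (S : List V) (u : V) {s : V} (hs : s ∈ S) :
    dList G u S ≤ G.dist u s :=
  Nat.sInf_le ⟨s, hs, rfl⟩

lemma dist_le_of_adj {V : Type*} {G : SimpleGraph V} (hG : G.Connected) {v u : V}
    (h : G.Adj v u) (w : V) : G.dist v w ≤ G.dist u w + 1 := by
  have h1 := hG.dist_triangle (u := v) (v := u) (w := w)
  rw [SimpleGraph.dist_eq_one_iff_adj.mpr h] at h1
  omega

lemma dList_le_of_adj {V : Type*} {G : SimpleGraph V} (hG : G.Connected) {S : List V}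
    (hS : ∃ s, s ∈ S) {v u : V} (h : G.Adj v u) : dList G v S ≤ dList G u S + 1 := by
  obtain ⟨s, hs, hsu⟩ : dList G u S ∈ (G.dist u) '' {s | s ∈ S} :=
    Nat.sInf_mem (Set.Nonempty.image _ hS)
  have h1 := dist_le_of_adj hG h s
  have h2 := dList_le G S v hs
  omega

/-- The first step of a geodesic from `v` to `w ≠ v` decreases the distance to `w`. -/
lemma exists_adj_dist_eq {V : Type*} {G : SimpleGraph V} (hG : G.Connected) {v w : V}
    (h : 1 ≤ G.dist v w) : ∃ u, G.Adj v u ∧ G.dist v w = G.dist u w + 1 := by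
  obtain ⟨p, hp⟩ := hG.exists_walk_length_eq_dist v w
  cases p with
  | nil => simp at h
  | @cons _ u _ hvu q =>
    refine ⟨u, hvu, ?_⟩
    have h1 := dist_le_of_adj hG hvu w
    have h2 := SimpleGraph.dist_le q
    rw [SimpleGraph.Walk.length_cons] at hp
    omega

/-- BFS invariant for computing the prioritized Voronoi diagram.
If `d(v,S) ≥ 1` and `v ∈ 𝕋(s_i,S)`, then `v` has a neighbour `u` with
`d(u,S) = d(v,S) − 1` lying in `𝕋(s_i,S)`, and `i` is the least index `j`
admitting such a neighbour in `𝕋(s_j,S)`. -/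
theorem bfs_invariant {V : Type*} [Fintype V] (G : SimpleGraph V)
    (hG : G.Connected) (S : List V) (hS : S.Nodup) (i : Fin S.length) (v : V)
    (hd : 1 ≤ dList G v S) (hv : v ∈ territory G S i) :
    (∃ u : V, G.Adj v u ∧ dList G u S = dList G v S - 1 ∧ u ∈ territory G S i) ∧
    (i : ℕ) = sInf {j : ℕ | ∃ hj : j < S.length, ∃ u : V,
      G.Adj v u ∧ dList G u S = dList G v S - 1 ∧ u ∈ territory G S ⟨j, hj⟩} := by
  obtain ⟨hvi, hlt⟩ := hv
  have hmem : S.get i ∈ S := S.get_mem i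
  have hex : ∃ u : V, G.Adj v u ∧ dList G u S = dList G v S - 1 ∧ u ∈ territory G S i := by
    obtain ⟨u, hvu, hu⟩ := exists_adj_dist_eq hG (v := v) (w := S.get i) (by omega)
    have h1 := dList_le_of_adj hG ⟨_, hmem⟩ hvu
    have h2 := dList_le G S u hmem
    refine ⟨u, hvu, by omega, by omega, fun j hj => ?_⟩
    have h3 := hlt j hj
    have h4 := dist_le_of_adj hG hvu (S.get j)
    omega
  refine ⟨hex, le_antisymm (le_csInf ⟨i, i.2, hex⟩ ?_) (Nat.sInf_le ⟨i.2, hex⟩)⟩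
  rintro j ⟨hj, u, hvu, hdu, huj, -⟩
  by_contra! hji
  have h3 := hlt ⟨j, hj⟩ hji
  have h4 := dist_le_of_adj hG hvu (S.get ⟨j, hj⟩)
  omega
end

section
/- Let G=(V,E) be a complete graph, let S=(s_1,…,s_p) be a proper vertex list with p ≥ 1, and let v ∉ S. Then 𝕋(s_1,S+v) = V \ {s_2,…,s_p,v}, 𝕋(s_i,S+v) = {s_i} for every i with 2 ≤ i ≤ p, and 𝕋(v,S+v) = {v}. Consequently, for every nonnegative cost function π, setting Λ = π(V) − Σ_{i=2}^{p} π(s_i), one has L_π(S+v) = max( {π(s_i) : 2 ≤ i ≤ p} ∪ {π(v), Λ − π(v)} ). -/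
/-- The load `ℓ_π(s_i,S)` of the `i`-th site: the total cost of its territory. -/
noncomputable def load {V : Type*} (G : SimpleGraph V) (π : V → ℝ) (S : List V)
    (i : Fin S.length) : ℝ :=
  ∑ᶠ x ∈ territory G S i, π x

/-- The load `L_π(S)` of the prioritized Voronoi diagram: the maximum load of a site. -/
noncomputable def Lload {V : Type*} (G : SimpleGraph V) (π : V → ℝ) (S : List V) : ℝ :=
  ⨆ i : Fin S.length, load G π S i

theorem dist_complete {V : Type*} {G : SimpleGraph V}
    (hG : ∀ u w : V, u ≠ w → G.Adj u w) {u w : V} (h : u ≠ w) : G.dist u w = 1 :=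
  SimpleGraph.dist_eq_one_iff_adj.2 (hG u w h)

theorem dList_of_mem {V : Type*} (G : SimpleGraph V) {T : List V} {x : V} (h : x ∈ T) :
    dList G x T = 0 :=
  Nat.sInf_eq_zero.2 (Or.inl ⟨x, h, SimpleGraph.dist_self⟩)

theorem dList_of_notMem {V : Type*} {G : SimpleGraph V}
    (hG : ∀ u w : V, u ≠ w → G.Adj u w) {T : List V} (hT : T ≠ []) {x : V} (h : x ∉ T) :
    dList G x T = 1 := by
  have himg : (G.dist x) '' {s | s ∈ T} = {1} := by
    ext n
    constructor
    · rintro ⟨s, hs, rfl⟩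
      exact dist_complete hG (fun e => h (e ▸ hs))
    · rintro rfl
      obtain ⟨s, hs⟩ := List.exists_mem_of_ne_nil T hT
      exact ⟨s, hs, dist_complete hG (fun e => h (e ▸ hs))⟩
  rw [dList, himg, csInf_singleton]

/-- In a complete graph, every site owns itself, and the first site owns in addition all vertices
that are not sites. -/
theorem mem_territory_complete {V : Type*} {G : SimpleGraph V}
    (hG : ∀ u w : V, u ≠ w → G.Adj u w) {T : List V} (hT : T.Nodup) (i : Fin T.length) (x : V) :
    x ∈ territory G T i ↔ x = T.get i ∨ ((i : ℕ) = 0 ∧ x ∉ T) := by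
  have hne : T ≠ [] := List.ne_nil_of_length_pos i.pos
  by_cases hx : x ∈ T
  · simp only [territory, Set.mem_ofPred_eq, dList_of_mem G hx, hx, not_true, and_false, or_false]
    constructor
    · rintro ⟨h, -⟩
      by_contra hxi
      rw [dist_complete hG hxi] at h
      exact one_ne_zero h
    · rintro rfl
      refine ⟨SimpleGraph.dist_self, fun j hj => ?_⟩
      rw [dist_complete hG (fun e => hj.ne' (List.nodup_iff_injective_get.1 hT e))]
      exact one_pos
  · have hxs : ∀ j, x ≠ T.get j := fun j e => hx (e ▸ T.get_mem j)
    simp only [territory, Set.mem_ofPred_eq, dList_of_notMem hG hne hx, hx, not_false_eq_true,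
      and_true, hxs i, false_or, dist_complete hG (hxs _), lt_irrefl, imp_false, true_and]
    constructor
    · intro h
      by_contra h0
      exact h ⟨0, i.pos⟩ (Fin.lt_def.2 (Nat.pos_of_ne_zero h0))
    · intro h0 j hj
      have := Fin.lt_def.1 hj
      omega

/-- in a complete graph, `𝕋(s_1,S+v) = V \ {s_2,…,s_p,v}`,
`𝕋(s_i,S+v) = {s_i}` for `2 ≤ i ≤ p`, `𝕋(v,S+v) = {v}`; consequently, with
`Λ = π(V) − Σ_{i=2}^p π(s_i)`, one has
`L_π(S+v) = max({π(s_i) : 2 ≤ i ≤ p} ∪ {π(v), Λ − π(v)})`. -/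
theorem balancedVertex_complete {V : Type*} [Fintype V] (G : SimpleGraph V)
    (hcomplete : ∀ u w : V, u ≠ w → G.Adj u w)
    (S : List V) (hS : S.Nodup) (hp : 1 ≤ S.length) (v : V) (hv : v ∉ S) :
    territory G (S ++ [v]) ⟨0, by simp⟩ =
      Set.univ \ ({x | ∃ i : Fin S.length, 1 ≤ (i : ℕ) ∧ x = S.get i} ∪ {v}) ∧
    (∀ i : Fin S.length, 1 ≤ (i : ℕ) →
      territory G (S ++ [v]) (i.castLE (by simp)) = {S.get i}) ∧
    territory G (S ++ [v]) ⟨S.length, by simp⟩ = {v} ∧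
    (∀ π : V → ℝ, (∀ x, 0 ≤ π x) →
      Lload G π (S ++ [v]) =
        sSup ({r | ∃ i : Fin S.length, 1 ≤ (i : ℕ) ∧ r = π (S.get i)} ∪
          {π v, ((∑ x : V, π x) -
            ∑ i ∈ Finset.univ.filter (fun i : Fin S.length => 1 ≤ (i : ℕ)), π (S.get i))
            - π v})) := by
  have hT : (S ++ [v]).Nodup := by
    have : ∀ a ∈ S, ¬a = v := fun a ha e => hv (e ▸ ha)
    simpa [List.nodup_append, hS] using this
  have hinj := List.nodup_iff_injective_get.1 hS
  have hSv : ∀ i : Fin S.length, S.get i ≠ v := fun i e => hv (e ▸ S.get_mem i)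
  have h1 : territory G (S ++ [v]) ⟨0, by simp⟩ =
      Set.univ \ ({x | ∃ i : Fin S.length, 1 ≤ (i : ℕ) ∧ x = S.get i} ∪ {v}) := by
    ext x
    have h0 : (S ++ [v]).get ⟨0, by simp⟩ = S.get ⟨0, hp⟩ := by
      simp [List.getElem_append_left hp]
    rw [mem_territory_complete hcomplete hT, h0]
    simp only [List.mem_append, List.mem_singleton, true_and, Set.mem_sdiff, Set.mem_univ,
      Set.mem_union, Set.mem_ofPred_eq, Set.mem_singleton_iff, not_or]
    constructor
    · rintro (rfl | ⟨hxS, hxv⟩)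
      · refine ⟨?_, hSv _⟩
        rintro ⟨i, hi, e⟩
        rw [← hinj e] at hi
        exact absurd hi (by simp)
      · refine ⟨?_, hxv⟩
        rintro ⟨i, -, rfl⟩
        exact hxS (S.get_mem i)
    · rintro ⟨hx, hxv⟩
      by_cases hxS : x ∈ S
      · obtain ⟨i, rfl⟩ := List.get_of_mem hxS
        left
        congr 1
        ext
        by_contra hi
        exact hx ⟨i, Nat.pos_of_ne_zero hi, rfl⟩
      · exact Or.inr ⟨hxS, hxv⟩
  have h2 : ∀ i : Fin S.length, 1 ≤ (i : ℕ) →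
      territory G (S ++ [v]) (i.castLE (by simp)) = {S.get i} := by
    intro i hi
    ext x
    have h0 : (S ++ [v]).get (i.castLE (by simp)) = S.get i := by
      simp [List.getElem_append_left i.2]
    rw [mem_territory_complete hcomplete hT, h0]
    have : ((i.castLE (by simp) : Fin (S ++ [v]).length) : ℕ) ≠ 0 := by
      simpa using Nat.one_le_iff_ne_zero.1 hi
    simp only [this, false_and, or_false, Set.mem_singleton_iff]
  have h3 : territory G (S ++ [v]) ⟨S.length, by simp⟩ = {v} := by
    ext x
    have h0 : (S ++ [v]).get ⟨S.length, by simp⟩ = v := by simp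
    rw [mem_territory_complete hcomplete hT, h0]
    have : S.length ≠ 0 := Nat.one_le_iff_ne_zero.1 hp
    simp only [this, false_and, or_false, Set.mem_singleton_iff]
  refine ⟨h1, h2, h3, fun π _ => ?_⟩
  have l1 : load G π (S ++ [v]) ⟨0, by simp⟩ = ((∑ x : V, π x) -
      ∑ i ∈ Finset.univ.filter (fun i : Fin S.length => 1 ≤ (i : ℕ)), π (S.get i)) - π v := by
    classical
    set F := Finset.univ.filter (fun i : Fin S.length => 1 ≤ (i : ℕ)) with hF
    have hvF : v ∉ F.image S.get := by
      simp only [Finset.mem_image, not_exists, not_and]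
      exact fun i _ => hSv i
    have hset : territory G (S ++ [v]) ⟨0, by simp⟩ =
        ((insert v (F.image S.get))ᶜ : Finset V) := by
      rw [h1]
      ext x
      simp [hF, not_or, and_comm, eq_comm]
    rw [load, hset, finsum_mem_coe_finset, ← Finset.sum_image (f := π) (g := S.get)
      (fun a _ b _ e => hinj e), ← Finset.sum_add_sum_compl (insert v (F.image S.get)) π,
      Finset.sum_insert hvF]
    ring
  have l2 : ∀ i : Fin S.length, 1 ≤ (i : ℕ) →
      load G π (S ++ [v]) (i.castLE (by simp)) = π (S.get i) := fun i hi => by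
    rw [load, h2 i hi, finsum_mem_singleton]
  have l3 : load G π (S ++ [v]) ⟨S.length, by simp⟩ = π v := by
    rw [load, h3, finsum_mem_singleton]
  rw [Lload, iSup, ← l1, ← l3]
  congr 1
  ext r
  simp only [Set.mem_range, Set.mem_union, Set.mem_ofPred_eq, Set.mem_insert_iff,
    Set.mem_singleton_iff]
  constructor
  · rintro ⟨⟨k, hk⟩, rfl⟩
    have hk' : k < S.length + 1 := by simpa using hk
    rcases Nat.lt_succ_iff_lt_or_eq.1 hk' with hlt | rfl
    · rcases Nat.eq_zero_or_pos k with rfl | hpos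
      · exact Or.inr (Or.inr rfl)
      · exact Or.inl ⟨⟨k, hlt⟩, hpos, l2 ⟨k, hlt⟩ hpos⟩
    · exact Or.inr (Or.inl rfl)
  · rintro (⟨i, hi, rfl⟩ | rfl | rfl)
    · exact ⟨_, l2 i hi⟩
    · exact ⟨_, rfl⟩
    · exact ⟨_, rfl⟩
end

section
/- Let G=(V,E) be a finite connected simple graph of diameter at most two and let S=(s_1,…,s_p) be a proper vertex list. Then for every j with 2 ≤ j ≤ p, the territory 𝕋(s_j,S) is contained in the closed neighbourhood N[s_j] = {s_j} ∪ {u : u adjacent to s_j}. -/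
/-- in a graph of diameter at most two, the territory of every site
other than the first one is contained in the closed neighbourhood of that site. -/
theorem territory_subset_closedNbhd_of_diam_two {V : Type*} [Fintype V]
    (G : SimpleGraph V) (hG : G.Connected) (hdiam : ∀ u w : V, G.dist u w ≤ 2)
    (S : List V) (hS : S.Nodup) (j : Fin S.length) (hj : 1 ≤ (j : ℕ)) :
    territory G S j ⊆ {u | u = S.get j ∨ G.Adj u (S.get j)} := by
  rintro v ⟨hv, hpri⟩
  -- The first site has strictly higher priority, so it is strictly farther from `v`.
  have hfar := hpri ⟨0, j.pos⟩ (Fin.lt_def.mpr hj)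
  have hle := hdiam v (S.get ⟨0, j.pos⟩)
  have hcases : G.dist v (S.get j) = 0 ∨ G.dist v (S.get j) = 1 := by omega
  exact hcases.imp hG.dist_eq_zero_iff.mp SimpleGraph.dist_eq_one_iff_adj.mp
end

section
/- Let G be the path graph with vertices v_0,v_1,…,v_{n−1} (n ≥ 3) and edges v_k v_{k+1}, let S=(v_0,v_{n−1}), and let v=v_j for some j with 0 < j < n−1. Then 𝕋(v,S+v) = { v_k : ⌊j/2⌋ + 1 ≤ k ≤ ⌈(n−1+j)/2⌉ − 1 }. -/
/-- The path graph on `Fin n`, with edges `v_k v_{k+1}` for `0 ≤ k ≤ n−2`. -/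
def pathG (n : ℕ) : SimpleGraph (Fin n) :=
  SimpleGraph.fromRel (fun i j => (i : ℕ) + 1 = (j : ℕ))

theorem pathG_adj {n : ℕ} {a b : Fin n} :
    (pathG n).Adj a b ↔ (a : ℕ) + 1 = b ∨ (b : ℕ) + 1 = a := by
  simp only [pathG, SimpleGraph.fromRel_adj, ne_eq, Fin.ext_iff]
  omega

/-- Each step of a walk changes the index by one, which bounds its length from below. -/
theorem le_length_of_walk {n : ℕ} {a b : Fin n} (p : (pathG n).Walk a b) :
    Nat.dist a b ≤ p.length := by
  induction p with
  | nil => simp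
  | cons h p ih =>
    rw [pathG_adj] at h
    simp only [SimpleGraph.Walk.length_cons, Nat.dist] at ih ⊢
    omega

theorem exists_walk_add {n : ℕ} (d a : ℕ) (h : a + d < n) :
    ∃ p : (pathG n).Walk ⟨a, by omega⟩ ⟨a + d, h⟩, p.length = d := by
  induction d with
  | zero => exact ⟨SimpleGraph.Walk.nil, rfl⟩
  | succ d ih =>
    obtain ⟨p, hp⟩ := ih (by omega)
    have hadj : (pathG n).Adj ⟨a + d, by omega⟩ ⟨a + (d + 1), h⟩ :=
      pathG_adj.2 (Or.inl rfl)
    exact ⟨p.concat hadj, by rw [SimpleGraph.Walk.length_concat, hp]⟩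

theorem exists_walk_of_le {n : ℕ} {a b : Fin n} (h : (a : ℕ) ≤ b) :
    ∃ p : (pathG n).Walk a b, p.length = (b : ℕ) - a := by
  obtain ⟨a, ha⟩ := a
  obtain ⟨b, hb⟩ := b
  obtain ⟨d, rfl⟩ := Nat.exists_eq_add_of_le h
  simpa using exists_walk_add d a hb

theorem exists_walk_dist {n : ℕ} (a b : Fin n) :
    ∃ p : (pathG n).Walk a b, p.length = Nat.dist a b := by
  rcases le_total (a : ℕ) b with h | h
  · obtain ⟨p, hp⟩ := exists_walk_of_le h
    exact ⟨p, by rw [hp, Nat.dist_eq_sub_of_le h]⟩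
  · obtain ⟨p, hp⟩ := exists_walk_of_le h
    exact ⟨p.reverse, by rw [SimpleGraph.Walk.length_reverse, hp, Nat.dist_eq_sub_of_le_right h]⟩

theorem pathG_dist {n : ℕ} (a b : Fin n) : (pathG n).dist a b = Nat.dist a b := by
  obtain ⟨p, hp⟩ := exists_walk_dist a b
  apply le_antisymm
  · exact hp ▸ SimpleGraph.dist_le p
  · obtain ⟨q, hq⟩ := p.reachable.exists_walk_length_eq_dist
    exact hq ▸ le_length_of_walk q

theorem dList_triple {V : Type*} (G : SimpleGraph V) (w x y z : V) :
    dList G w [x, y, z] = min (G.dist w x) (min (G.dist w y) (G.dist w z)) := by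
  have hset : (G.dist w) '' {s | s ∈ [x, y, z]} = {G.dist w x, G.dist w y, G.dist w z} := by
    ext m
    simp [eq_comm]
  rw [dList, hset, csInf_insert (OrderBot.bddBelow _) (by simp), csInf_pair]

/-- The last of three sites loses every tie, so it owns exactly the vertices strictly closer to
it than to both other sites. -/
theorem mem_territory_last_iff {V : Type*} (G : SimpleGraph V) (w x y z : V) :
    w ∈ territory G [x, y, z] ⟨2, by simp⟩ ↔
      G.dist w z < G.dist w x ∧ G.dist w z < G.dist w y := by
  have hall (P : Fin [x, y, z].length → Prop) :
      (∀ i, P i) ↔ P ⟨0, by simp⟩ ∧ P ⟨1, by simp⟩ ∧ P ⟨2, by simp⟩ := by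
    refine ⟨fun h => ⟨h _, h _, h _⟩, fun ⟨h₀, h₁, h₂⟩ ⟨i, hi⟩ => ?_⟩
    match i, hi with
    | 0, _ => exact h₀
    | 1, _ => exact h₁
    | 2, _ => exact h₂
  simp only [territory, Set.mem_ofPred_eq, hall, dList_triple]
  simp
  omega

/-- on the path `v_0,…,v_{n−1}` with sites `S = (v_0, v_{n−1})` and
a new site `v = v_j` (`0 < j < n−1`), the territory of `v` is
`{v_k : ⌊j/2⌋ + 1 ≤ k ≤ ⌈(n−1+j)/2⌉ − 1}`. -/
theorem path_territory (n : ℕ) (hn : 3 ≤ n) (j : ℕ) (h0 : 0 < j) (hj : j < n - 1) :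
    territory (pathG n)
        [(⟨0, by omega⟩ : Fin n), ⟨n - 1, by omega⟩, ⟨j, by omega⟩] ⟨2, by simp⟩ =
      {w : Fin n | j / 2 + 1 ≤ (w : ℕ) ∧ (w : ℕ) ≤ (n - 1 + j + 1) / 2 - 1} := by
  ext w
  have hw := w.isLt
  rw [mem_territory_last_iff, pathG_dist, pathG_dist, pathG_dist]
  simp only [Nat.dist, Set.mem_ofPred_eq]
  omega
end

section
/- Let G be the cycle graph with vertices v_0,v_1,…,v_{n−1} in cyclic order, let S=(v_0), and let v=v_i for some i with 0 < i ≤ n/2. Then 𝕋(v_i,S+v_i) = W(v_i,v_0) = { v_k : ⌊i/2⌋ + 1 ≤ k ≤ ⌈(n+i)/2⌉ − 1 }. -/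
/-- `W(u,v)`: the set of vertices strictly closer to `u` than to `v`. -/
def Wset {V : Type*} (G : SimpleGraph V) (u v : V) : Set V :=
  {w | G.dist u w < G.dist v w}

/-- The cycle graph on `Fin n`, with edges `v_k v_{k+1 mod n}`. -/
def cycleG (n : ℕ) : SimpleGraph (Fin n) :=
  SimpleGraph.fromRel (fun i j => (j : ℕ) = ((i : ℕ) + 1) % n)

/-- The length of the shorter arc between the positions `a` and `b` on a cycle of length `n`;
with truncated subtraction, `(a - b) + (b - a)` is `|a - b|`. -/
def arc (n a b : ℕ) : ℕ := min ((a - b) + (b - a)) (n - ((a - b) + (b - a)))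

theorem succ_mod_eq {n a : ℕ} (ha : a < n) : (a + 1) % n = if a + 1 = n then 0 else a + 1 := by
  split_ifs with h
  · simp [h]
  · exact Nat.mod_eq_of_lt (by omega)

theorem cycleG_adj {n : ℕ} {u v : Fin n} : (cycleG n).Adj u v ↔
    u ≠ v ∧ ((v : ℕ) = ((u : ℕ) + 1) % n ∨ (u : ℕ) = ((v : ℕ) + 1) % n) := by
  simp [cycleG, SimpleGraph.fromRel_adj]

theorem arc_le_length {n : ℕ} {u v : Fin n} (p : (cycleG n).Walk u v) :
    arc n u v ≤ p.length := by
  induction p with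
  | nil => simp [arc]
  | @cons u v w h p ih =>
    have h' := (cycleG_adj.1 h).2
    rw [succ_mod_eq u.2, succ_mod_eq v.2] at h'
    rw [SimpleGraph.Walk.length_cons]
    have := u.2
    have := v.2
    have := w.2
    unfold arc at *
    split_ifs at h' <;> omega

/-- Taking `m` steps forward from `a` leads to `a + m` modulo `n`. -/
theorem cycleG_walk {n : ℕ} (hn : 3 ≤ n) (a : Fin n) (m : ℕ) :
    ∀ b : Fin n, (b : ℕ) = (a + m) % n → ∃ p : (cycleG n).Walk a b, p.length = m := by
  induction m with
  | zero =>
    intro b hb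
    have : a = b := Fin.ext (by rw [hb, Nat.add_zero, Nat.mod_eq_of_lt a.2])
    subst this
    exact ⟨.nil, rfl⟩
  | succ m ih =>
    intro b hb
    have hlt : (a + m) % n < n := Nat.mod_lt _ (by omega)
    obtain ⟨p, hp⟩ := ih ⟨(a + m) % n, hlt⟩ rfl
    have hb' : (b : ℕ) = ((a + m) % n + 1) % n := by rw [hb, Nat.mod_add_mod, Nat.add_assoc]
    have hadj : (cycleG n).Adj ⟨(a + m) % n, hlt⟩ b := by
      refine cycleG_adj.2 ⟨fun h => ?_, Or.inl hb'⟩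
      have h' : (a + m) % n = (b : ℕ) := congrArg Fin.val h
      rw [succ_mod_eq hlt] at hb'
      split_ifs at hb' <;> omega
    exact ⟨p.concat hadj, by simp [hp]⟩

theorem cycleG_dist_of_le {n : ℕ} (hn : 3 ≤ n) {a b : Fin n} (hab : (a : ℕ) ≤ b) :
    (cycleG n).dist a b = arc n a b := by
  obtain ⟨p, hp⟩ := cycleG_walk hn a (b - a) b
    (by rw [Nat.add_sub_cancel' hab, Nat.mod_eq_of_lt b.2])
  obtain ⟨q, hq⟩ := cycleG_walk hn b (n - (b - a)) a (by
    have : (b : ℕ) + (n - (b - a)) = a + n := by omega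
    rw [this, Nat.add_mod_right, Nat.mod_eq_of_lt a.2])
  have h1 := SimpleGraph.dist_le p
  have h2 := SimpleGraph.dist_le q
  rw [SimpleGraph.dist_comm] at h2
  -- a shortest walk exists because `p` connects `a` to `b`
  obtain ⟨r, hr⟩ := p.reachable.exists_walk_length_eq_dist
  have h3 := arc_le_length r
  unfold arc at *
  omega

theorem cycleG_dist {n : ℕ} (hn : 3 ≤ n) (a b : Fin n) :
    (cycleG n).dist a b = arc n a b := by
  rcases le_total (a : ℕ) b with h | h
  · exact cycleG_dist_of_le hn h
  · rw [SimpleGraph.dist_comm, cycleG_dist_of_le hn h]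
    unfold arc
    omega

theorem dList_pair {V : Type*} (G : SimpleGraph V) (v s t : V) :
    dList G v [s, t] = min (G.dist v s) (G.dist v t) := by
  have : {x | x ∈ [s, t]} = ({s, t} : Set V) := by ext; simp
  rw [dList, this, Set.image_pair, csInf_pair]

theorem territory_pair {V : Type*} (G : SimpleGraph V) (s t : V) :
    territory G [s, t] ⟨1, by simp⟩ = Wset G t s := by
  ext w
  simp only [territory, Wset, Set.mem_ofPred_eq, dList_pair, G.dist_comm (u := s),
    G.dist_comm (u := t)]
  constructor
  · rintro ⟨h1, h2⟩
    have h3 := h2 ⟨0, by simp⟩ (by simp)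
    simp only [List.get_eq_getElem, List.getElem_cons_zero, List.getElem_cons_succ] at h1 h3
    omega
  · intro h
    refine ⟨by simpa using h.le, fun j hj => ?_⟩
    have : j = ⟨0, by simp⟩ := Fin.ext (by simpa [Fin.lt_def] using hj)
    subst this
    simpa using h

/-- on the cycle `v_0,…,v_{n−1}` with the single site `S = (v_0)`
and a new site `v = v_i` (`0 < i ≤ n/2`), the territory of `v_i` equals
`W(v_i,v_0) = {v_k : ⌊i/2⌋ + 1 ≤ k ≤ ⌈(n+i)/2⌉ − 1}`. -/
theorem cycle_territory (n : ℕ) (hn : 3 ≤ n) (i : ℕ) (h0 : 0 < i) (hi : 2 * i ≤ n) :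
    territory (cycleG n) [(⟨0, by omega⟩ : Fin n), ⟨i, by omega⟩] ⟨1, by simp⟩ =
        Wset (cycleG n) ⟨i, by omega⟩ ⟨0, by omega⟩ ∧
    Wset (cycleG n) ⟨i, by omega⟩ ⟨0, by omega⟩ =
      {w : Fin n | i / 2 + 1 ≤ (w : ℕ) ∧ (w : ℕ) ≤ (n + i + 1) / 2 - 1} := by
  refine ⟨territory_pair _ _ _, ?_⟩
  ext w
  have := w.2
  simp only [Wset, Set.mem_ofPred_eq, cycleG_dist hn, arc]
  omega
end

section
/- Let T=(V,E) be a finite tree and let s,v be distinct vertices with D = d(s,v). Let x be the unique vertex on the s–v path with d(s,x) = ⌊D/2⌋ + 1. Then W(v,s) = { u ∈ V : x ∈ I(s,u) }; that is, the set of vertices strictly closer to v than to s is exactly the set of vertices u such that x lies on the (unique) s–u path. -/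
/-- When `a` is strictly closer to `y` than to `x`, so is every vertex on a shortest path from `a`
to `y`. -/
lemma SimpleGraph.Connected.dist_lt_of_mem_support_geodesic {V : Type*} {T : SimpleGraph V}
    (hT : T.Connected) {a x y w : V} (p : T.Walk a y) (hp : p.length = T.dist a y)
    (h : T.dist a y < T.dist a x) (hw : w ∈ p.support) : T.dist w y < T.dist w x := by
  obtain ⟨q, r, rfl⟩ := SimpleGraph.Walk.mem_support_iff_exists_append.mp hw
  have h1 := SimpleGraph.dist_le q
  have h2 := SimpleGraph.dist_le r
  have h3 := hT.dist_triangle (u := a) (v := w) (w := x)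
  rw [SimpleGraph.Walk.length_append] at hp
  omega

/-- The edge `yx` of a tree separates the vertices closer to `y` from those closer to `x`. -/
lemma SimpleGraph.IsTree.dist_eq_of_edge_between {V : Type*} {T : SimpleGraph V} (hT : T.IsTree)
    {a b x y : V} (hyx : T.Adj y x) (ha : T.dist a y < T.dist a x)
    (hb : T.dist b x < T.dist b y) :
    T.dist a b = T.dist a y + 1 + T.dist x b := by
  obtain ⟨p, hp, hpl⟩ := hT.connected.exists_path_of_dist a y
  obtain ⟨q, hq, hql⟩ := hT.connected.exists_path_of_dist b x
  -- The two shortest paths lie on different sides of `yx`, so joining them by `yx` gives a path.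
  have hr : (p.append (.cons hyx q.reverse)).IsPath := by
    rw [SimpleGraph.Walk.isPath_def, SimpleGraph.Walk.support_append, List.nodup_append']
    refine ⟨hp.support_nodup, by simpa using hq.support_nodup, fun w hw hw' => ?_⟩
    have h1 := hT.connected.dist_lt_of_mem_support_geodesic p hpl ha hw
    have h2 := hT.connected.dist_lt_of_mem_support_geodesic q hql hb (w := w) (by simpa using hw')
    omega
  obtain ⟨g, hg, hgl⟩ := hT.connected.exists_path_of_dist a b
  have heq := congrArg SimpleGraph.Walk.length ((hT.existsUnique_path a b).unique hg hr)
  simp only [SimpleGraph.Walk.length_append, SimpleGraph.Walk.length_cons,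
    SimpleGraph.Walk.length_reverse] at heq
  rw [T.dist_comm (u := x) (v := b)]
  omega

/-- in a tree, let `s ≠ v`, `D = d(s,v)` and let `x` be the (unique)
vertex on the `s`–`v` path with `d(s,x) = ⌊D/2⌋ + 1`. Then `W(v,s)` is exactly the
set of vertices `u` such that `x` lies on the `s`–`u` path, i.e.
`W(v,s) = {u : x ∈ I(s,u)}`. -/
theorem tree_Wset_eq_interval {V : Type*} [Fintype V] (T : SimpleGraph V)
    (hT : T.IsTree) (s v x : V) (hsv : s ≠ v)
    (hx1 : T.dist s v = T.dist s x + T.dist x v)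
    (hx2 : T.dist s x = T.dist s v / 2 + 1) :
    Wset T v s = {u : V | T.dist s u = T.dist s x + T.dist x u} := by
  have hc := hT.connected
  ext u
  simp only [Wset, Set.mem_ofPred_eq]
  constructor
  · intro hu
    -- `y` is the neighbour of `x` on the way to `s`.
    obtain ⟨y, hxy, hy⟩ : ∃ y, T.Adj x y ∧ T.dist y s + 1 ≤ T.dist x s := by
      obtain ⟨p, hp⟩ := hc.exists_walk_length_eq_dist x s
      cases p with
      | nil => simp at hx2
      | cons h q =>
        have := SimpleGraph.dist_le q
        rw [SimpleGraph.Walk.length_cons] at hp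
        exact ⟨_, h, by omega⟩
    rw [T.dist_comm (u := y), T.dist_comm (u := x)] at hy
    have hyx1 := SimpleGraph.dist_eq_one_iff_adj.mpr hxy.symm
    have hsx := hc.dist_triangle (u := s) (v := y) (w := x)
    have hsyv := hc.dist_triangle (u := s) (v := y) (w := v)
    have hvx := T.dist_comm (u := v) (v := x)
    have hvy := T.dist_comm (u := v) (v := y)
    rcases hT.dist_eq_dist_add_one_of_adj u hxy with h | h
    · have hvu := hT.dist_eq_of_edge_between (a := u) (b := v) hxy.symm (by omega) (by omega)
      have hsu := hc.dist_triangle (u := s) (v := y) (w := u)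
      rw [T.dist_comm (u := y) (v := u)] at hsu
      rw [T.dist_comm (u := v) (v := u)] at hu
      omega
    · have hsu := hT.dist_eq_of_edge_between (a := s) (b := u) hxy.symm (by omega) (by omega)
      omega
  · intro hu
    have h1 := hc.dist_triangle (u := v) (v := x) (w := u)
    rw [T.dist_comm (u := v) (v := x)] at h1
    omega
end

section
/- Let U be a finite universe and let A and B be lists of n subsets of U each. Then there exist a finite universe U' with |U'| = 2|U| + 2 and lists A', B' of 2n subsets of U' each, such that (i) every set in B' intersects at most half of the sets in B' (i.e., for each entry b' of B', at most n of the 2n entries of B' intersect b'), and (ii) some set of A' intersects every set of B' if and only if some set of A intersects every set of B. -/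
/-! The universe contains two disjoint copies of `U`, given by embeddings `f` and `g` with disjoint
ranges. Take `B'` to consist of both copies of every `b ∈ B`, and `A'` of the sets `f(a) ∪ g(a)` for
`a ∈ A`, each listed twice. Sets of `B'` in different copies are disjoint, so each meets at most the
`n` sets in its own copy; and `f(a) ∪ g(a)` meets both copies of `b` exactly when `a` meets `b`.
The two remaining points of the universe lie in no set.
-/

/-- The union of two disjoint copies of `a` meets the first copy of `b` iff `a` meets `b`. -/
theorem union_map_inter_map_nonempty {α β : Type*} [DecidableEq α] [DecidableEq β]
    (f g : α ↪ β) (hfg : ∀ x y, f x ≠ g y) (a b : Finset α) :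
    ((a.map f ∪ a.map g) ∩ b.map f).Nonempty ↔ (a ∩ b).Nonempty := by
  have hd : Disjoint (a.map g) (b.map f) := by
    simp only [Finset.disjoint_left, Finset.mem_map]
    rintro _ ⟨x, -, rfl⟩ ⟨y, -, h⟩
    exact hfg y x h
  rw [Finset.union_inter_distrib_right, Finset.disjoint_iff_inter_eq_empty.mp hd,
    Finset.union_empty, ← Finset.map_inter, Finset.map_nonempty]

/-- A set in one copy meets no set in the other copy. -/
theorem countP_map_inter_eq_zero {α β : Type*} [DecidableEq β]
    (f g : α ↪ β) (hfg : ∀ x y, f x ≠ g y) (b : Finset α) (B : List (Finset α)) :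
    (B.map (Finset.map g)).countP (fun c => decide ((b.map f ∩ c).Nonempty)) = 0 := by
  rw [List.countP_eq_zero]
  intro c hc
  obtain ⟨d, -, rfl⟩ := List.mem_map.mp hc
  rw [decide_eq_true_eq]
  simp only [Finset.Nonempty, Finset.mem_inter, Finset.mem_map]
  rintro ⟨_, ⟨x, -, rfl⟩, ⟨y, -, h⟩⟩
  exact hfg x y h.symm


/-- every hitting-set instance `(A,B,U)` with `|A| = |B| = n` can be
reduced to an equivalent instance `(A',B',U')` with `|U'| = 2|U| + 2` and
`|A'| = |B'| = 2n`, in which every set of `B'` intersects at most half (i.e. at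
most `n`) of the sets of `B'`. -/
theorem hs_reduction_half {α : Type*} [Fintype α] [DecidableEq α] (n : ℕ)
    (A B : List (Finset α)) (hA : A.length = n) (hB : B.length = n) :
    ∃ A' B' : List (Finset (Fin (2 * Fintype.card α + 2))),
      A'.length = 2 * n ∧ B'.length = 2 * n ∧
      (∀ b' ∈ B', B'.countP (fun c => decide ((b' ∩ c).Nonempty)) ≤ n) ∧
      ((∃ a' ∈ A', ∀ b' ∈ B', (a' ∩ b').Nonempty) ↔
        (∃ a ∈ A, ∀ b ∈ B, (a ∩ b).Nonempty)) := by
  obtain ⟨e⟩ : Nonempty (α ⊕ α ↪ Fin (2 * Fintype.card α + 2)) := by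
    apply Function.Embedding.nonempty_of_card_le
    simp only [Fintype.card_sum, Fintype.card_fin]
    omega
  let f : α ↪ Fin (2 * Fintype.card α + 2) := Function.Embedding.inl.trans e
  let g : α ↪ Fin (2 * Fintype.card α + 2) := Function.Embedding.inr.trans e
  have hfg : ∀ x y, f x ≠ g y := fun x y h => Sum.inl_ne_inr (e.injective h)
  have hgf : ∀ x y, g x ≠ f y := fun x y h => hfg y x h.symm
  let A₀ := A.map fun a => a.map f ∪ a.map g
  refine ⟨A₀ ++ A₀, B.map (Finset.map f) ++ B.map (Finset.map g), ?_, ?_, ?_, ?_⟩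
  · simp only [A₀, List.length_append, List.length_map]
    omega
  · simp only [List.length_append, List.length_map]
    omega
  · intro b' hb'
    rw [List.countP_append]
    rcases List.mem_append.mp hb' with h | h <;> obtain ⟨b, -, rfl⟩ := List.mem_map.mp h
    · rw [countP_map_inter_eq_zero f g hfg, Nat.add_zero]
      exact List.countP_le_length.trans_eq (by rw [List.length_map, hB])
    · rw [countP_map_inter_eq_zero g f hgf, Nat.zero_add]
      exact List.countP_le_length.trans_eq (by rw [List.length_map, hB])
  · have key : ∀ a : Finset α,
        (∀ b' ∈ B.map (Finset.map f) ++ B.map (Finset.map g),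
          ((a.map f ∪ a.map g) ∩ b').Nonempty) ↔ ∀ b ∈ B, (a ∩ b).Nonempty := by
      intro a
      have hf := union_map_inter_map_nonempty f g hfg a
      have hg := union_map_inter_map_nonempty g f hgf a
      simp only [Finset.union_comm (a.map g)] at hg
      simp only [List.forall_mem_append, List.forall_mem_map, hf, hg, and_self]
    constructor
    · rintro ⟨a', ha', h⟩
      obtain ⟨a, ha, rfl⟩ := List.mem_map.mp ((List.mem_append.mp ha').elim id id)
      exact ⟨a, ha, (key a).mp h⟩
    · rintro ⟨a, ha, h⟩
      exact ⟨_, List.mem_append_left _ (List.mem_map.mpr ⟨a, ha, rfl⟩), (key a).mpr h⟩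
end

section
/- Let α, β be integers with α ≥ 2, let U be a finite universe, and let A and B be nonempty finite lists of subsets of U. Then there exist a natural number t with t ≤ 3|U| + |β| + 1, a finite universe U' ⊇ U with |U'| = α·t + β, and a list A' of subsets of U' with |A'| = |A|, such that every set of A' has cardinality exactly t, and some set of A' intersects every set of B if and only if some set of A intersects every set of B (the list B is unchanged; its sets are subsets of U ⊆ U'). -/
/-! Take `t = |U| + |b|` and adjoin to `U` exactly `k = a * t + b - |U|` fresh points. Since `a ≥ 2`,
`k ≥ 2 * t + b - |U| ≥ t`, so every `s ∈ A` can be padded with `t - |s|` fresh points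
to size exactly `t`. The sets of `B` contain no fresh point, so padding does not change which
of them are hit. -/

/-- Fresh points never help to hit a set of old points. -/
lemma disjSum_inter_image_inl_nonempty {γ : Type*} [DecidableEq γ] (x s : Finset γ)
    (f : Finset ℕ) :
    (x.disjSum f ∩ s.image Sum.inl).Nonempty ↔ (x ∩ s).Nonempty := by
  constructor
  · rintro ⟨y, hy⟩
    obtain ⟨hyx, hys⟩ := Finset.mem_inter.1 hy
    obtain ⟨z, hz, rfl⟩ := Finset.mem_image.1 hys
    exact ⟨z, Finset.mem_inter.2 ⟨Finset.inl_mem_disjSum.1 hyx, hz⟩⟩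
  · rintro ⟨z, hz⟩
    obtain ⟨hzx, hzs⟩ := Finset.mem_inter.1 hz
    exact ⟨Sum.inl z, Finset.mem_inter.2
      ⟨Finset.inl_mem_disjSum.2 hzx, Finset.mem_image_of_mem _ hzs⟩⟩


/-- given integers `α ≥ 2` and `β`, every hitting-set instance
`(A,B,U)` with `A`, `B` nonempty can be reduced (keeping `B` unchanged) to an
equivalent instance `(A',B,U')` in which, for some `t ≤ 3|U| + |β| + 1`, the
universe `U' ⊇ U` has cardinality `α·t + β` and every set of `A'` has
cardinality exactly `t`. -/
theorem hs_reduction_cardinality {γ : Type*} [DecidableEq γ] (a b : ℤ)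
    (ha : 2 ≤ a) (U : Finset γ) (A B : List (Finset γ))
    (hAne : A ≠ []) (hBne : B ≠ [])
    (hAU : ∀ s ∈ A, s ⊆ U) (hBU : ∀ s ∈ B, s ⊆ U) :
    ∃ (t : ℕ) (U' : Finset (γ ⊕ ℕ)) (A' : List (Finset (γ ⊕ ℕ))),
      t ≤ 3 * U.card + b.natAbs + 1 ∧
      U.image Sum.inl ⊆ U' ∧
      (U'.card : ℤ) = a * t + b ∧
      A'.length = A.length ∧
      (∀ s ∈ A', s ⊆ U') ∧
      (∀ s ∈ A', s.card = t) ∧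
      ((∃ a' ∈ A', ∀ s ∈ B, (a' ∩ s.image Sum.inl).Nonempty) ↔
        (∃ a'' ∈ A, ∀ s ∈ B, (a'' ∩ s).Nonempty)) := by
  obtain ⟨t, ht⟩ : ∃ t : ℕ, t = U.card + b.natAbs := ⟨_, rfl⟩
  have hat : 2 * (t : ℤ) ≤ a * t := mul_le_mul_of_nonneg_right ha (by positivity)
  obtain ⟨k, hk⟩ : ∃ k : ℕ, (k : ℤ) = a * t + b - U.card :=
    ⟨(a * t + b - U.card).toNat, Int.toNat_of_nonneg (by omega)⟩
  have htk : t ≤ k := by omega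
  refine ⟨t, U.disjSum (Finset.range k),
    A.map fun s => s.disjSum (Finset.range (t - s.card)), by omega, ?_, ?_, by simp, ?_, ?_, ?_⟩
  · intro y hy
    obtain ⟨z, hz, rfl⟩ := Finset.mem_image.1 hy
    exact Finset.inl_mem_disjSum.2 hz
  · rw [Finset.card_disjSum, Finset.card_range]
    push_cast
    omega
  · intro s hs
    obtain ⟨x, hx, rfl⟩ := List.mem_map.1 hs
    exact Finset.disjSum_mono (hAU x hx) (Finset.range_mono (by omega))
  · intro s hs
    obtain ⟨x, hx, rfl⟩ := List.mem_map.1 hs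
    have hxU := Finset.card_le_card (hAU x hx)
    rw [Finset.card_disjSum, Finset.card_range]
    omega
  · simp [disjSum_inter_image_inl_nonempty]
end
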